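/- arXiv:2105.10929 — 8 statements merged into one kernel-verified Lean document; each statement's English description precedes it below -/
import Mathlib

section
/- Let f : ℝ^n → ℝ^n, let Q ∈ ℝ^{n×n} be symmetric, and write p(y) = yᵀQy. Let g_1,…,g_s ∈ ℝ^n be stage values of an s-stage Runge–Kutta method with coefficient matrix 𝒜 = (a_{ij}) and weights b = (b_i), step size h, initial point x, i.e. g_i = x + h ∑_{j=1}^s a_{ij} f(g_j), and let φ_h(x) = x + h ∑_{j=1}^s b_j f(g_j). Then p(φ_h(x)) = p(x) + 2h ∑_{i=1}^s b_i g_iᵀ Q f(g_i) + h² ∑_{i,j=1}^s (b_i b_j − b_i a_{ij} − b_j a_{ji}) f(g_i)ᵀ Q f(g_j). -/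
open Matrix BigOperators

/-!
Write `k i` for the stage derivatives and `v = ∑ i, b i • k i`, so that the step is `x + h • v` and
`B (x + h • v) (x + h • v)` expands into `B x x`, the cross terms `h • (B x v + B v x)` and
`h ^ 2 • B v v`. Solving `g i = x + h • ∑ j, A i j • k j` for the starting point turns `B x v` and
`B v x` into `∑ i, b i • B (g i) (k i)` and `∑ i, b i • B (k i) (g i)`, at the cost of the
corrections `b j * A j i` and `b i * A i j` in the `h ^ 2` term.
-/

section CommSemiring

variable {R M N ι : Type*} [CommSemiring R] [AddCommMonoid M] [Module R M]
  [AddCommMonoid N] [Module R N] [Fintype ι]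

theorem bilin_add_smul_self (B : M →ₗ[R] M →ₗ[R] N) (h : R) (x v : M) :
    B (x + h • v) (x + h • v) = B x x + h • (B x v + B v x) + h ^ 2 • B v v := by
  simp only [map_add, map_smul, LinearMap.add_apply, LinearMap.smul_apply]
  module

theorem bilin_sum_smul_sum_smul (B : M →ₗ[R] M →ₗ[R] N) (b c : ι → R) (k l : ι → M) :
    B (∑ i, b i • k i) (∑ j, c j • l j) = ∑ i, ∑ j, (b i * c j) • B (k i) (l j) := by
  rw [LinearMap.map_sum₂]
  simp only [map_sum, map_smul, LinearMap.smul_apply, smul_smul, mul_comm]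

theorem sum_smul_bilin_stage_right (B : M →ₗ[R] M →ₗ[R] N) (A : Matrix ι ι R) (b : ι → R) (h : R)
    (x : M) (k g : ι → M) (hg : ∀ i, g i = x + h • ∑ j, A i j • k j) :
    ∑ i, b i • B (k i) (g i) =
      B (∑ i, b i • k i) x + h • ∑ i, ∑ j, (b i * A i j) • B (k i) (k j) := by
  simp only [hg, map_add, map_smul, map_sum, LinearMap.sum_apply, LinearMap.smul_apply, smul_add,
    Finset.sum_add_distrib, Finset.smul_sum, smul_smul, mul_left_comm h]

theorem sum_smul_bilin_stage_left (B : M →ₗ[R] M →ₗ[R] N) (A : Matrix ι ι R) (b : ι → R) (h : R)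
    (x : M) (k g : ι → M) (hg : ∀ i, g i = x + h • ∑ j, A i j • k j) :
    ∑ i, b i • B (g i) (k i) =
      B x (∑ i, b i • k i) + h • ∑ i, ∑ j, (b j * A j i) • B (k i) (k j) := by
  rw [Finset.sum_comm]
  exact sum_smul_bilin_stage_right B.flip A b h x k g hg

end CommSemiring

section CommRing

variable {R M ι : Type*} [CommRing R] [AddCommGroup M] [Module R M] [Fintype ι]

theorem rk_quadratic_form_identity_general {N : Type*} [AddCommGroup N] [Module R N]
    (B : M →ₗ[R] M →ₗ[R] N) (A : Matrix ι ι R) (b : ι → R) (h : R) (x : M) (k g : ι → M)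
    (hg : ∀ i, g i = x + h • ∑ j, A i j • k j) (φ : M) (hφ : φ = x + h • ∑ j, b j • k j) :
    B φ φ = B x x + h • ∑ i, b i • (B (g i) (k i) + B (k i) (g i))
      + h ^ 2 • ∑ i, ∑ j, (b i * b j - b i * A i j - b j * A j i) • B (k i) (k j) := by
  rw [hφ, bilin_add_smul_self, bilin_sum_smul_sum_smul]
  simp only [smul_add, sub_smul, Finset.sum_add_distrib, Finset.sum_sub_distrib,
    sum_smul_bilin_stage_left B A b h x k g hg, sum_smul_bilin_stage_right B A b h x k g hg]
  module

theorem rk_quadratic_form_identity_of_isSymm (B : LinearMap.BilinForm R M) (hB : B.IsSymm)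
    (A : Matrix ι ι R) (b : ι → R) (h : R) (x : M) (k g : ι → M)
    (hg : ∀ i, g i = x + h • ∑ j, A i j • k j) (φ : M) (hφ : φ = x + h • ∑ j, b j • k j) :
    B φ φ = B x x + 2 * h * ∑ i, b i * B (g i) (k i)
      + h ^ 2 * ∑ i, ∑ j, (b i * b j - b i * A i j - b j * A j i) * B (k i) (k j) := by
  have cross_terms : ∑ i, b i * (B (g i) (k i) + B (k i) (g i)) = 2 * ∑ i, b i * B (g i) (k i) := by
    simp only [hB.eq (k _) (g _), ← two_mul, mul_left_comm _ (2 : R), Finset.mul_sum]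
  rw [rk_quadratic_form_identity_general B A b h x k g hg φ hφ]
  simp only [smul_eq_mul, cross_terms]
  ring

end CommRing

/-- Key identity for a quadratic form `p(y) = yᵀQy` evaluated at one step of a
Runge–Kutta method (cf. Hairer–Lubich–Wanner, Thm. IV.2.2 and the paper's
Theorem 1 proof). -/
theorem rk_quadratic_form_identity {n s : ℕ}
    (f : (Fin n → ℝ) → (Fin n → ℝ))
    (Q : Matrix (Fin n) (Fin n) ℝ) (hQ : Qᵀ = Q)
    (A : Matrix (Fin s) (Fin s) ℝ) (b : Fin s → ℝ) (h : ℝ)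
    (x : Fin n → ℝ) (g : Fin s → (Fin n → ℝ))
    (hg : ∀ i, g i = x + h • ∑ j, A i j • f (g j))
    (φ : Fin n → ℝ) (hφ : φ = x + h • ∑ j, b j • f (g j)) :
    φ ⬝ᵥ Q.mulVec φ =
      x ⬝ᵥ Q.mulVec x
        + 2 * h * ∑ i, b i * (g i ⬝ᵥ Q.mulVec (f (g i)))
        + h ^ 2 * ∑ i, ∑ j,
            (b i * b j - b i * A i j - b j * A j i)
              * (f (g i) ⬝ᵥ Q.mulVec (f (g j))) := by
  have hB : (Matrix.toBilin' Q).IsSymm := Matrix.isSymm_toBilin'_iff_isSymm.mpr hQ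
  simpa only [Matrix.toBilin'_apply', Function.comp_apply] using
    rk_quadratic_form_identity_of_isSymm (Matrix.toBilin' Q) hB A b h x (f ∘ g) g hg φ hφ
end

section
/- Let 𝒜 = (a_{ij}) ∈ ℝ^{s×s} and b = (b_i) ∈ ℝ^s. If b_i b_j − b_i a_{ij} − b_j a_{ji} = 0 for all i,j ∈ {1,…,s} and a_{ij} a_{ik} − a_{ij} a_{jk} − a_{ik} a_{kj} = 0 for all i,j,k ∈ {1,…,s}, then a_{ij} = 0 for all i,j and b_i = 0 for all i. (These are the conditions under which a Runge–Kutta scheme would preserve an irreducible quadratic second integral; hence no Runge–Kutta method can preserve such an integral.) -/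
/-!
The condition on the rows of `A` is the condition on the weights with `b` replaced by a row of `A`,
so both are instances of the symplecticity condition. Its diagonal part `w j ^ 2 = 2 * w j * A j j`,
read for the `j`-th row, says `A j j ^ 2 = 2 * A j j ^ 2`, so the diagonal of `A` vanishes.
With a zero diagonal the same identity reads `w j ^ 2 = 0`, for every row as well as for `b`.
-/

/-- The symplecticity condition of a Runge–Kutta method with coefficient matrix `A` and weights `w`,
often written `M = 0` with `M j k = w j * A j k + w k * A k j - w j * w k`. The weights are kept
separate from `A` so that the condition can also be imposed on the rows of `A`. -/
def IsSymplecticWeight {ι R : Type*} [NonUnitalNonAssocRing R] (A : Matrix ι ι R) (w : ι → R) :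
    Prop :=
  ∀ j k, w j * w k - w j * A j k - w k * A k j = 0

namespace IsSymplecticWeight

theorem mul_self_eq_add {ι R : Type*} [NonUnitalNonAssocRing R] {A : Matrix ι ι R} {w : ι → R}
    (hw : IsSymplecticWeight A w) (j : ι) : w j * w j = w j * A j j + w j * A j j :=
  sub_eq_zero.mp ((sub_sub _ _ _).symm.trans (hw j j))

variable {ι R : Type*} [Ring R] [IsReduced R] {A : Matrix ι ι R}

theorem diag_eq_zero_of_row {i : ι} (hrow : IsSymplecticWeight A (A.row i)) : A i i = 0 := by
  have hsq : A i i * A i i = 0 := left_eq_add.mp (hrow.mul_self_eq_add i)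
  exact eq_zero_of_pow_eq_zero ((sq _).trans hsq)

theorem eq_zero_of_diag_eq_zero {w : ι → R} (hw : IsSymplecticWeight A w)
    (hdiag : ∀ i, A i i = 0) : w = 0 := by
  funext j
  have hsq : w j * w j = 0 := by
    rw [hw.mul_self_eq_add j, hdiag j, mul_zero, add_zero]
  exact eq_zero_of_pow_eq_zero ((sq _).trans hsq)

end IsSymplecticWeight

theorem rk_quadratic_second_integral_conditions_force_zero_general {ι R : Type*} [Ring R]
    [IsReduced R] {A : Matrix ι ι R} {b : ι → R} (hb : IsSymplecticWeight A b)
    (hA : ∀ i, IsSymplecticWeight A (A.row i)) : A = 0 ∧ b = 0 := by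
  have hdiag : ∀ i, A i i = 0 := fun i => (hA i).diag_eq_zero_of_row
  exact ⟨funext fun i => (hA i).eq_zero_of_diag_eq_zero hdiag, hb.eq_zero_of_diag_eq_zero hdiag⟩

/-- The algebraic conditions on the Butcher coefficients required for a
Runge–Kutta method to preserve an irreducible quadratic second integral force
all coefficients and weights to vanish; hence no Runge–Kutta method can
preserve such an integral. -/
theorem rk_quadratic_second_integral_conditions_force_zero {s : ℕ}
    (A : Matrix (Fin s) (Fin s) ℝ) (b : Fin s → ℝ)
    (hb : ∀ i j, b i * b j - b i * A i j - b j * A j i = 0)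
    (hA : ∀ i j k, A i j * A i k - A i j * A j k - A i k * A k j = 0) :
    (∀ i j, A i j = 0) ∧ (∀ i, b i = 0) := by
  obtain ⟨rfl, rfl⟩ := rk_quadratic_second_integral_conditions_force_zero_general hb hA
  exact ⟨fun _ _ => rfl, fun _ => rfl⟩
end

section
/- Let f : ℝ^n → ℝ^n, p ∈ ℝ^n and c : ℝ^n → ℝ satisfy pᵀ f(y) = c(y) (pᵀ y) for all y ∈ ℝ^n (p is an affine second integral with cofactor c). Let g_1,…,g_s ∈ ℝ^n satisfy the Runge–Kutta stage equations g_i = x + h ∑_{j=1}^s a_{ij} f(g_j), let φ_h(x) = x + h ∑_{j=1}^s b_j f(g_j), and set D_c = diag(c(g_1),…,c(g_s)) ∈ ℝ^{s×s}. If the matrix I − h𝒜D_c is invertible, then pᵀ φ_h(x) = (1 + h bᵀ D_c (I − h𝒜D_c)^{-1} 𝟙) · (pᵀ x), where 𝟙 ∈ ℝ^s is the all-ones vector. -/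
open Matrix BigOperators

/-! A linear functional maps a Runge–Kutta step to the same Runge–Kutta step in the scalars. If it
is a second integral, its values at the stages therefore satisfy the stage equations of a scalar
linear problem with coefficient `c`. This is a linear system with matrix `1 - h𝒜D_c`, and solving it
expresses the update as a multiple of the initial value. -/

section Update

variable {R V W ι : Type*} [Semiring R] [AddCommMonoid V] [Module R V] [AddCommMonoid W]
  [Module R W] [Fintype ι]

/-- The Runge–Kutta combination of the slopes `k` with weights `w` and step size `h`, started at
`x`. Taking `w = b` gives the update map, and taking `w = A i` gives the `i`-th stage. -/
def rkUpdate (h : R) (w : ι → R) (k : ι → V) (x : V) : V :=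
  x + h • ∑ j, w j • k j

theorem map_rkUpdate (ℓ : V →ₗ[R] W) (h : R) (w : ι → R) (k : ι → V) (x : V) :
    ℓ (rkUpdate h w k x) = rkUpdate h w (ℓ ∘ k) (ℓ x) := by
  simp only [rkUpdate, map_add, map_smul, map_sum, Function.comp_apply]

theorem rkUpdate_eq_add_mul_dotProduct (h : R) (w k : ι → R) (u : R) :
    rkUpdate h w k u = u + h * (w ⬝ᵥ k) :=
  rfl

end Update

section DiscreteCofactor

variable {R V ι : Type*} [CommRing R] [AddCommMonoid V] [Module R V] [Fintype ι] [DecidableEq ι]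

/-- The discrete cofactor `1 + h bᵀ D (1 - h𝒜D)⁻¹ 𝟙` of the method `(A, b)`: the factor by which a
step multiplies the initial value when the slopes are `D` times the stage values. It is meaningful
only when `1 - h𝒜D` is invertible, since otherwise the matrix inverse is `0`. -/
noncomputable def discreteCofactor (A : Matrix ι ι R) (b : ι → R) (h : R) (D : Matrix ι ι R) : R :=
  1 + h * (b ⬝ᵥ (D * (1 - h • (A * D))⁻¹) *ᵥ 1)

theorem stages_eq_smul_inv_mulVec_one {A D : Matrix ι ι R} {h u : R} {v : ι → R}
    (hinv : IsUnit (1 - h • (A * D))) (hv : ∀ i, v i = rkUpdate h (A i) (D *ᵥ v) u) :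
    v = u • ((1 - h • (A * D))⁻¹ *ᵥ 1) := by
  have stage_system : u • 1 = (1 - h • (A * D)) *ᵥ v := by
    rw [sub_mulVec, one_mulVec, smul_mulVec, ← mulVec_mulVec, eq_sub_iff_add_eq]
    ext i
    simp only [Pi.add_apply, Pi.smul_apply, Pi.one_apply, smul_eq_mul, mul_one]
    exact (hv i).symm
  let := hinv.invertible
  rw [← mulVec_smul, inv_mulVec_eq_vec stage_system]

theorem rkUpdate_eq_discreteCofactor_mul {A D : Matrix ι ι R} {h u : R} {v : ι → R}
    (hinv : IsUnit (1 - h • (A * D))) (hv : ∀ i, v i = rkUpdate h (A i) (D *ᵥ v) u)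
    (b : ι → R) :
    rkUpdate h b (D *ᵥ v) u = discreteCofactor A b h D * u := by
  rw [rkUpdate_eq_add_mul_dotProduct, stages_eq_smul_inv_mulVec_one hinv hv, mulVec_smul,
    mulVec_mulVec, dotProduct_smul, smul_eq_mul, discreteCofactor]
  ring

theorem rk_preserves_affine_second_integral_general (ℓ : V →ₗ[R] R) {f : V → V} {c : V → R}
    {A : Matrix ι ι R} {h : R} {x : V} {g : ι → V}
    (hℓ : ∀ i, ℓ (f (g i)) = c (g i) * ℓ (g i))
    (hg : ∀ i, g i = rkUpdate h (A i) (f ∘ g) x)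
    (hinv : IsUnit (1 - h • (A * diagonal (c ∘ g)))) (b : ι → R) :
    ℓ (rkUpdate h b (f ∘ g) x) = discreteCofactor A b h (diagonal (c ∘ g)) * ℓ x := by
  have slopes : ℓ ∘ f ∘ g = diagonal (c ∘ g) *ᵥ (ℓ ∘ g) := by
    ext i
    simpa only [mulVec_diagonal, Function.comp_apply] using hℓ i
  have scalar_stages (i : ι) :
      (ℓ ∘ g) i = rkUpdate h (A i) (diagonal (c ∘ g) *ᵥ (ℓ ∘ g)) (ℓ x) := by
    rw [← slopes, ← map_rkUpdate, ← hg i, Function.comp_apply]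
  rw [map_rkUpdate, slopes, rkUpdate_eq_discreteCofactor_mul hinv scalar_stages]

end DiscreteCofactor

/-- Theorem: every Runge–Kutta method preserves affine second integrals
`p(x) = pᵀx`, with discrete cofactor `1 + h bᵀ D_c (I − h𝒜D_c)⁻¹ 𝟙`. -/
theorem rk_preserves_affine_second_integral {n s : ℕ}
    (f : (Fin n → ℝ) → (Fin n → ℝ))
    (p : Fin n → ℝ) (c : (Fin n → ℝ) → ℝ)
    (hp : ∀ y, p ⬝ᵥ f y = c y * (p ⬝ᵥ y))
    (A : Matrix (Fin s) (Fin s) ℝ) (b : Fin s → ℝ) (h : ℝ)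
    (x : Fin n → ℝ) (g : Fin s → (Fin n → ℝ))
    (hg : ∀ i, g i = x + h • ∑ j, A i j • f (g j))
    (φ : Fin n → ℝ) (hφ : φ = x + h • ∑ j, b j • f (g j))
    (Dc : Matrix (Fin s) (Fin s) ℝ)
    (hDc : Dc = Matrix.diagonal fun i => c (g i))
    (hinv : IsUnit ((1 : Matrix (Fin s) (Fin s) ℝ) - h • (A * Dc))) :
    p ⬝ᵥ φ =
      (1 + h * (b ⬝ᵥ (Dc * ((1 : Matrix (Fin s) (Fin s) ℝ) - h • (A * Dc))⁻¹).mulVec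
        (fun _ => (1 : ℝ)))) * (p ⬝ᵥ x) := by
  subst hφ hDc
  exact rk_preserves_affine_second_integral_general (dotProductBilin ℝ ℝ p) (fun i => hp (g i))
    hg hinv b
end

section
/- Let f : ℝ^n → ℝ^n, q, r ∈ ℝ^n and c : ℝ^n → ℝ satisfy qᵀ f(y) = c(y)(qᵀy) and rᵀ f(y) = c(y)(rᵀy) for all y ∈ ℝ^n (q and r are affine second integrals with the same cofactor c). Let g_1,…,g_s ∈ ℝ^n satisfy the Runge–Kutta stage equations g_i = x + h ∑_{j=1}^s a_{ij} f(g_j), let φ_h(x) = x + h ∑_{j=1}^s b_j f(g_j), and set D_c = diag(c(g_1),…,c(g_s)). If I − h𝒜D_c is invertible, then (qᵀ φ_h(x)) · (rᵀ x) = (qᵀ x) · (rᵀ φ_h(x)); in particular the rational first integral H(x) = (qᵀx)/(rᵀx) is preserved by every Runge–Kutta method. -/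
open Matrix BigOperators

/-!
The stage equations and the update both have the form `x + h ∑ⱼ wⱼ f(gⱼ)`. An affine second
integral `p` with cofactor `c` therefore turns the stage equations into the linear system
`(I - h𝒜D_c) (p(gᵢ))ᵢ = p(x) 𝟙`. Solving it and substituting into the update shows that one step
multiplies `p` by a factor that depends on `c(g₁), …, c(gₛ)` but not on `p`. Two second integrals
with the same cofactor are thus scaled by the same factor, and their ratio is unchanged.
-/

section RungeKutta

variable {R E ι : Type*} [CommRing R] [AddCommGroup E] [Module R E] [Fintype ι]

/-- The affine function `p` is a second integral of `ẋ = f(x)` with cofactor `c`. The derivative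
of `p` along the vector field is expressed through the linear part of `p`. -/
def IsAffineSecondIntegral (f : E → E) (c : E → R) (p : E →ᵃ[R] R) : Prop :=
  ∀ y, p.linear (f y) = c y * p y

/-- The Runge–Kutta combination of the slopes at the stage values `g` with weights `w`. The
weights `b` give the update map `φ_h`, and the rows of `𝒜` give the right-hand sides of the stage
equations. -/
def rungeKuttaUpdate (f : E → E) (h : R) (x : E) (g : ι → E) (w : ι → R) : E :=
  x + h • ∑ j, w j • f (g j)

/-- The stage equations of the Runge–Kutta method with coefficient matrix `A`, as a condition on
the stage values `g`: they may have no solution or several. -/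
def IsRungeKuttaStages (f : E → E) (h : R) (A : Matrix ι ι R) (x : E) (g : ι → E) : Prop :=
  ∀ i, g i = rungeKuttaUpdate f h x g (A i)

/-- The factor by which a Runge–Kutta step multiplies an affine second integral whose cofactor
takes the values `γ` at the stages. For constant `γ` it is the stability function of the method at
`h * γ`. The inverse is `0` when `1 - h • (A * diagonal γ)` is not invertible. -/
noncomputable def rungeKuttaAmplification [DecidableEq ι] (A : Matrix ι ι R) (b : ι → R) (h : R)
    (γ : ι → R) : R :=
  1 + h * (b ⬝ᵥ diagonal γ *ᵥ (1 - h • (A * diagonal γ))⁻¹ *ᵥ 1)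

namespace IsAffineSecondIntegral

variable [DecidableEq ι] {f : E → E} {c : E → R} {p : E →ᵃ[R] R} {A : Matrix ι ι R} {h : R}
  {x : E} {g : ι → E}

theorem map_rungeKuttaUpdate (hp : IsAffineSecondIntegral f c p) (h : R) (x : E) (g : ι → E)
    (w : ι → R) :
    p (rungeKuttaUpdate f h x g w) = p x + h * (w ⬝ᵥ diagonal (c ∘ g) *ᵥ (p ∘ g)) := by
  have hslopes : p.linear (∑ j, w j • f (g j)) = w ⬝ᵥ diagonal (c ∘ g) *ᵥ (p ∘ g) := by
    simp [dotProduct, mulVec_diagonal, hp (g _)]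
  calc p (x + h • ∑ j, w j • f (g j))
      = p.linear (h • ∑ j, w j • f (g j)) + p x := by
        rw [add_comm x, ← vadd_eq_add, p.map_vadd, vadd_eq_add]
    _ = p x + h * (w ⬝ᵥ diagonal (c ∘ g) *ᵥ (p ∘ g)) := by
        rw [map_smul, hslopes, smul_eq_mul, add_comm]

theorem mulVec_comp_stages (hp : IsAffineSecondIntegral f c p)
    (hg : IsRungeKuttaStages f h A x g) :
    (1 - h • (A * diagonal (c ∘ g))) *ᵥ (p ∘ g) = p x • 1 := by
  ext i
  have hstage : p (g i) = p x + h * (A *ᵥ diagonal (c ∘ g) *ᵥ (p ∘ g)) i := by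
    conv_lhs => rw [hg i]
    exact hp.map_rungeKuttaUpdate h x g (A i)
  simp [sub_mulVec, smul_mulVec, ← mulVec_mulVec, hstage]

theorem comp_stages_eq (hp : IsAffineSecondIntegral f c p) (hg : IsRungeKuttaStages f h A x g)
    (hinv : IsUnit (1 - h • (A * diagonal (c ∘ g)))) :
    p ∘ g = p x • (1 - h • (A * diagonal (c ∘ g)))⁻¹ *ᵥ 1 := by
  have : Invertible (1 - h • (A * diagonal (c ∘ g))) := hinv.invertible
  rw [← mulVec_smul, ← hp.mulVec_comp_stages hg, inv_mulVec_eq_vec rfl]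

theorem map_rungeKuttaUpdate_eq_mul (hp : IsAffineSecondIntegral f c p)
    (hg : IsRungeKuttaStages f h A x g) (hinv : IsUnit (1 - h • (A * diagonal (c ∘ g))))
    (b : ι → R) :
    p (rungeKuttaUpdate f h x g b) = rungeKuttaAmplification A b h (c ∘ g) * p x := by
  rw [hp.map_rungeKuttaUpdate, hp.comp_stages_eq hg hinv, mulVec_smul, dotProduct_smul,
    smul_eq_mul, rungeKuttaAmplification]
  ring

end IsAffineSecondIntegral

theorem rk_preserves_affine_rational_integral_general [DecidableEq ι] {f : E → E} {c : E → R}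
    {q r : E →ᵃ[R] R} (hq : IsAffineSecondIntegral f c q) (hr : IsAffineSecondIntegral f c r)
    {A : Matrix ι ι R} {h : R} {x : E} {g : ι → E} (hg : IsRungeKuttaStages f h A x g)
    (hinv : IsUnit (1 - h • (A * diagonal (c ∘ g)))) (b : ι → R) :
    q (rungeKuttaUpdate f h x g b) * r x = q x * r (rungeKuttaUpdate f h x g b) := by
  rw [hq.map_rungeKuttaUpdate_eq_mul hg hinv, hr.map_rungeKuttaUpdate_eq_mul hg hinv]
  ring

end RungeKutta

/-- Corollary: all Runge–Kutta methods preserve rational first integrals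
`H(x) = (qᵀx)/(rᵀx)` with affine numerator and denominator, since the two
affine second integrals share the same cofactor. -/
theorem rk_preserves_affine_rational_integral {n s : ℕ}
    (f : (Fin n → ℝ) → (Fin n → ℝ))
    (q r : Fin n → ℝ) (c : (Fin n → ℝ) → ℝ)
    (hq : ∀ y, q ⬝ᵥ f y = c y * (q ⬝ᵥ y))
    (hr : ∀ y, r ⬝ᵥ f y = c y * (r ⬝ᵥ y))
    (A : Matrix (Fin s) (Fin s) ℝ) (b : Fin s → ℝ) (h : ℝ)
    (x : Fin n → ℝ) (g : Fin s → (Fin n → ℝ))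
    (hg : ∀ i, g i = x + h • ∑ j, A i j • f (g j))
    (φ : Fin n → ℝ) (hφ : φ = x + h • ∑ j, b j • f (g j))
    (Dc : Matrix (Fin s) (Fin s) ℝ)
    (hDc : Dc = Matrix.diagonal fun i => c (g i))
    (hinv : IsUnit ((1 : Matrix (Fin s) (Fin s) ℝ) - h • (A * Dc))) :
    (q ⬝ᵥ φ) * (r ⬝ᵥ x) = (q ⬝ᵥ x) * (r ⬝ᵥ φ) := by
  subst hφ hDc
  exact rk_preserves_affine_rational_integral_general (q := (dotProductEquiv ℝ _ q).toAffineMap)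
    (r := (dotProductEquiv ℝ _ r).toAffineMap) hq hr hg hinv b
end

section
/- Let n ≥ 2, let φ : ℝ^n → ℝ^n and c̃ : ℝ^n → ℝ both be differentiable at a point x₀ ∈ ℝ^n, and suppose that for all x ∈ ℝ^n the first two components of φ satisfy φ(x)_1 = c̃(x) x_1 and φ(x)_2 = c̃(x) x_2 (i.e. the coordinate functions x_1 and x_2 are discrete second integrals of φ with the same cofactor c̃). If c̃(x₀) = 0, then the Jacobian determinant of φ at x₀ vanishes: det(Dφ(x₀)) = 0. (Thus the common cofactor of two affine discrete second integrals divides the Jacobian determinant of the map.) -/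
open Matrix

/-!
A linear combination of two second integrals `p`, `q` with cofactor `c` is again a second integral
with cofactor `c`, so some nontrivial combination `r` vanishes at `x₀`. If `c x₀ = 0`,
then `r ∘ φ = c * r` is `o(1) * O(x - x₀)`, hence has derivative zero at `x₀`, and by the chain rule
the nonzero functional `Dr(φ x₀)` annihilates the range of `Dφ(x₀)`.
-/

open Asymptotics Topology

/-- `p` is a discrete second integral of the map `φ` with discrete cofactor `c`. The cofactor is
part of the data, so that one can express that two second integrals share it. -/
def IsDiscreteSecondIntegral {α R : Type*} [Mul R] (φ : α → α) (c p : α → R) : Prop :=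
  ∀ x, p (φ x) = c x * p x

namespace IsDiscreteSecondIntegral

variable {α R S : Type*} {φ : α → α} {c p q : α → R}

theorem add [Mul R] [Add R] [LeftDistribClass R] (hp : IsDiscreteSecondIntegral φ c p)
    (hq : IsDiscreteSecondIntegral φ c q) : IsDiscreteSecondIntegral φ c (p + q) := fun x ↦ by
  simp only [Pi.add_apply, hp x, hq x, mul_add]

theorem const_smul [Mul R] [SMul S R] [SMulCommClass S R R] (s : S)
    (hp : IsDiscreteSecondIntegral φ c p) : IsDiscreteSecondIntegral φ c (s • p) := fun x ↦ by
  simp only [Pi.smul_apply, hp x, mul_smul_comm]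

end IsDiscreteSecondIntegral

theorem exists_ne_zero_or_ne_zero_and_mul_add_mul_eq_zero {R : Type*} [CommRing R] [Nontrivial R]
    (a b : R) : ∃ s t : R, (s ≠ 0 ∨ t ≠ 0) ∧ s * a + t * b = 0 := by
  by_cases ha : a = 0
  · exact ⟨1, 0, .inl one_ne_zero, by rw [ha, mul_zero, zero_mul, add_zero]⟩
  · exact ⟨-b, a, .inr ha, by ring⟩

theorem det_eq_zero_of_comp_eq_zero {K V W : Type*} [Field K] [AddCommGroup V]
    [Module K V] [FiniteDimensional K V] [AddCommMonoid W] [Module K W] {f : V →ₗ[K] V}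
    {g : V →ₗ[K] W} (hg : g ≠ 0) (hgf : g ∘ₗ f = 0) : LinearMap.det f = 0 := by
  by_contra hdet
  have hf : Function.Surjective f := (LinearMap.equivOfDetNeZero f hdet).surjective
  exact hg ((LinearMap.cancel_right hf).mp (hgf.trans (LinearMap.zero_comp f).symm))

theorem linearIndependent_pair_proj {R ι : Type*} [CommRing R] [TopologicalSpace R]
    [IsTopologicalRing R] {i j : ι} (hij : i ≠ j) :
    LinearIndependent R ![ContinuousLinearMap.proj (R := R) (φ := fun _ : ι ↦ R) i,
      ContinuousLinearMap.proj j] := by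
  classical
  refine LinearIndependent.pair_iff.mpr fun s t hst ↦ ⟨?_, ?_⟩
  · simpa [hij.symm] using DFunLike.congr_fun hst (Pi.single i 1)
  · simpa [hij] using DFunLike.congr_fun hst (Pi.single j 1)

section Derivative

variable {𝕜 E : Type*} [NontriviallyNormedField 𝕜] [NormedAddCommGroup E] [NormedSpace 𝕜 E]
  {φ : E → E} {φ' : E →L[𝕜] E} {c p q : E → 𝕜} {p' q' : E →L[𝕜] 𝕜} {x₀ : E}

theorem hasFDerivAt_smul_of_eq_zero {F : Type*} [NormedAddCommGroup F] [NormedSpace 𝕜 F]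
    {f : E → F} (hc : ContinuousAt c x₀) (hf : DifferentiableAt 𝕜 f x₀) (hc₀ : c x₀ = 0)
    (hf₀ : f x₀ = 0) : HasFDerivAt (fun x ↦ c x • f x) (0 : E →L[𝕜] F) x₀ := by
  have hc_small : c =o[𝓝 x₀] fun _ ↦ (1 : 𝕜) :=
    (isLittleO_one_iff 𝕜).mpr (hc₀ ▸ hc.tendsto)
  have hf_big : f =O[𝓝 x₀] fun x ↦ x - x₀ := by
    simpa only [hf₀, sub_zero] using hf.isBigO_sub
  refine .of_isLittleO ?_
  simpa only [hc₀, zero_smul, sub_zero, _root_.zero_apply, one_smul] using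
    hc_small.smul_isBigO hf_big

theorem IsDiscreteSecondIntegral.hasFDerivAt_comp_eq_zero (h : IsDiscreteSecondIntegral φ c p)
    (hφ : HasFDerivAt φ φ' x₀) (hc : ContinuousAt c x₀) (hp : DifferentiableAt 𝕜 p x₀)
    (hp' : HasFDerivAt p p' (φ x₀)) (hc₀ : c x₀ = 0) (hp₀ : p x₀ = 0) : p' ∘L φ' = 0 := by
  have h_comp : p ∘ φ = fun x ↦ c x • p x := funext h
  have h_chain : HasFDerivAt (p ∘ φ) (p' ∘L φ') x₀ := hp'.comp x₀ hφ
  exact h_chain.unique (h_comp ▸ hasFDerivAt_smul_of_eq_zero hc hp hc₀ hp₀)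

theorem cofactor_divides_jacobian_determinant_general [FiniteDimensional 𝕜 E]
    (hφ : HasFDerivAt φ φ' x₀) (hc : ContinuousAt c x₀)
    (hφp : IsDiscreteSecondIntegral φ c p) (hφq : IsDiscreteSecondIntegral φ c q)
    (hp : DifferentiableAt 𝕜 p x₀) (hq : DifferentiableAt 𝕜 q x₀)
    (hp' : HasFDerivAt p p' (φ x₀)) (hq' : HasFDerivAt q q' (φ x₀))
    (hpq : LinearIndependent 𝕜 ![p', q']) (hc₀ : c x₀ = 0) :
    LinearMap.det (φ' : E →ₗ[𝕜] E) = 0 := by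
  obtain ⟨s, t, hst, hr₀⟩ := exists_ne_zero_or_ne_zero_and_mul_add_mul_eq_zero (p x₀) (q x₀)
  have hr' : s • p' + t • q' ≠ 0 := fun h ↦
    hst.elim (· (LinearIndependent.pair_iff.mp hpq s t h).1)
      (· (LinearIndependent.pair_iff.mp hpq s t h).2)
  have h_comp : (s • p' + t • q') ∘L φ' = 0 :=
    ((hφp.const_smul s).add (hφq.const_smul t)).hasFDerivAt_comp_eq_zero hφ hc
      ((hp.const_smul s).add (hq.const_smul t)) ((hp'.const_smul s).add (hq'.const_smul t)) hc₀ hr₀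
  exact det_eq_zero_of_comp_eq_zero
    (ContinuousLinearMap.coe_injective.ne hr') (congrArg ContinuousLinearMap.toLinearMap h_comp)

end Derivative

/-- If a differentiable map `φ` has two coordinate functions `x₁, x₂` as
discrete second integrals with the same cofactor `c̃`, then at any point where
the cofactor vanishes so does the Jacobian determinant of `φ`; i.e., the
cofactor divides the Jacobian determinant. -/
theorem cofactor_divides_jacobian_determinant {n : ℕ} (hn : 2 ≤ n)
    (φ : (Fin n → ℝ) → (Fin n → ℝ)) (ctilde : (Fin n → ℝ) → ℝ)
    (x₀ : Fin n → ℝ)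
    (hφ : DifferentiableAt ℝ φ x₀) (hc : DifferentiableAt ℝ ctilde x₀)
    (h1 : ∀ x : Fin n → ℝ, φ x ⟨0, by omega⟩ = ctilde x * x ⟨0, by omega⟩)
    (h2 : ∀ x : Fin n → ℝ, φ x ⟨1, by omega⟩ = ctilde x * x ⟨1, by omega⟩)
    (h0 : ctilde x₀ = 0) :
    LinearMap.det (fderiv ℝ φ x₀ : (Fin n → ℝ) →ₗ[ℝ] (Fin n → ℝ)) = 0 := by
  have h_ne : (⟨0, by omega⟩ : Fin n) ≠ ⟨1, by omega⟩ := by simp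
  exact cofactor_divides_jacobian_determinant_general (p := fun x ↦ x _) (q := fun x ↦ x _)
    hφ.hasFDerivAt hc.continuousAt h1 h2
    (differentiableAt_apply _ _) (differentiableAt_apply _ _)
    (hasFDerivAt_apply _ _) (hasFDerivAt_apply _ _) (linearIndependent_pair_proj h_ne) h0
end

section
/- Let f : ℝ^n → ℝ^n, p ∈ ℝ^n and λ ∈ ℝ satisfy pᵀ f(y) = λ (pᵀ y) for all y ∈ ℝ^n (p is an affine second integral with constant cofactor λ). Let g_1,…,g_s ∈ ℝ^n satisfy the Runge–Kutta stage equations g_i = x + h ∑_{j=1}^s a_{ij} f(g_j) and let φ_h(x) = x + h ∑_{j=1}^s b_j f(g_j). If the matrix I − hλ𝒜 ∈ ℝ^{s×s} is invertible, then pᵀ φ_h(x) = R(λh) · (pᵀ x), where R(z) = 1 + z bᵀ (I − z𝒜)^{-1} 𝟙 is the stability function of the method and 𝟙 ∈ ℝ^s is the all-ones vector. -/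
open Matrix BigOperators

/-! An affine second integral `p` with constant cofactor `λ` maps solutions of `ẋ = f(x)` to
solutions of the scalar test equation `ẏ = λ y`. Runge–Kutta methods are equivariant under affine
maps, so `p` also maps a Runge–Kutta step for `f` to a step for the test equation, and there the
method multiplies by its stability function at `λh`. -/

namespace RungeKutta

section Equivariance

/-- The Runge–Kutta update `x + h ∑ⱼ bⱼ f(gⱼ)` with weights `b` from given stage values `g`. -/
def step {ι R V : Type*} [Fintype ι] [Semiring R] [AddCommMonoid V] [Module R V]
    (b : ι → R) (f : V → V) (h : R) (x : V) (g : ι → V) : V :=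
  x + h • ∑ j, b j • f (g j)

/-- The Runge–Kutta stage equations for the values `g`: the `i`-th stage is the update whose
weights are the `i`-th row of the coefficient matrix. -/
def IsStages {ι R V : Type*} [Fintype ι] [Semiring R] [AddCommMonoid V] [Module R V]
    (A : Matrix ι ι R) (f : V → V) (h : R) (x : V) (g : ι → V) : Prop :=
  ∀ i, g i = step (A i) f h x g

variable {ι R V W : Type*} [Fintype ι] [Ring R] [AddCommGroup V] [Module R V]
  [AddCommGroup W] [Module R W] {p : V →ᵃ[R] W} {f : V → V} {f' : W → W} {g : ι → V}

theorem map_step (hf : ∀ j, p.linear (f (g j)) = f' (p (g j))) (b : ι → R) (h : R) (x : V) :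
    p (step b f h x g) = step b f' h (p x) (p ∘ g) := by
  rw [step, add_comm, ← vadd_eq_add, p.map_vadd, vadd_eq_add, add_comm]
  simp [step, hf]

theorem IsStages.map {A : Matrix ι ι R} {h : R} {x : V} (hg : IsStages A f h x g)
    (hf : ∀ j, p.linear (f (g j)) = f' (p (g j))) : IsStages A f' h (p x) (p ∘ g) := fun i ↦
  calc
    p (g i) = p (step (A i) f h x g) := congrArg p (hg i)
    _ = step (A i) f' h (p x) (p ∘ g) := map_step hf (A i) h x

end Equivariance

section TestEquation

variable {ι R : Type*} [Fintype ι] [CommRing R]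

theorem step_const_mul (b : ι → R) (lam h y : R) (u : ι → R) :
    step b (lam * ·) h y u = y + lam * h * (b ⬝ᵥ u) := by
  simp only [step, smul_eq_mul, dotProduct, Finset.mul_sum]
  congr! 2
  ring

variable [DecidableEq ι]

/-- The stability function `R(z) = 1 + z bᵀ (I − z𝒜)⁻¹ 𝟙` of the method with coefficients `A` and
weights `b`. Where `1 - z • A` is not invertible, the junk value `0` of the matrix inverse
gives `R(z) = 1`. -/
noncomputable def stabilityFunction (A : Matrix ι ι R) (b : ι → R) (z : R) : R :=
  1 + z * (b ⬝ᵥ (1 - z • A)⁻¹ *ᵥ 1)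

variable {A : Matrix ι ι R} {lam h y : R} {u : ι → R}

theorem IsStages.mulVec_eq (hu : IsStages A (lam * ·) h y u) :
    (1 - (lam * h) • A) *ᵥ u = y • 1 := by
  ext i
  have hi : u i = y + lam * h * (A *ᵥ u) i := (hu i).trans (step_const_mul (A i) lam h y u)
  simp only [sub_mulVec, one_mulVec, smul_mulVec, Pi.sub_apply, Pi.smul_apply, Pi.one_apply,
    smul_eq_mul, mul_one]
  linear_combination hi

theorem IsStages.eq_inv_mulVec (hu : IsStages A (lam * ·) h y u)
    (hA : IsUnit (1 - (lam * h) • A)) : u = y • (1 - (lam * h) • A)⁻¹ *ᵥ 1 := by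
  have hdet := (isUnit_iff_isUnit_det _).1 hA
  rw [← mulVec_smul, ← hu.mulVec_eq, mulVec_mulVec, nonsing_inv_mul _ hdet, one_mulVec]

theorem IsStages.step_eq_stabilityFunction_mul (hu : IsStages A (lam * ·) h y u)
    (hA : IsUnit (1 - (lam * h) • A)) (b : ι → R) :
    step b (lam * ·) h y u = stabilityFunction A b (lam * h) * y := by
  rw [step_const_mul, hu.eq_inv_mulVec hA, dotProduct_smul, smul_eq_mul, stabilityFunction]
  ring

end TestEquation

end RungeKutta

open RungeKutta in
theorem rk_constant_cofactor_stability_function_general {ι R V : Type*} [Fintype ι]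
    [DecidableEq ι] [CommRing R] [AddCommGroup V] [Module R V] {f : V → V} {p : V →ᵃ[R] R}
    {lam h : R} {A : Matrix ι ι R} {x : V} {g : ι → V}
    (hp : ∀ j, p.linear (f (g j)) = lam * p (g j)) (hg : IsStages A f h x g)
    (hA : IsUnit (1 - (lam * h) • A)) (b : ι → R) :
    p (step b f h x g) = stabilityFunction A b (lam * h) * p x :=
  calc
    p (step b f h x g) = step b (lam * ·) h (p x) (p ∘ g) := map_step hp b h x
    _ = stabilityFunction A b (lam * h) * p x := (hg.map hp).step_eq_stabilityFunction_mul hA b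

/-- Corollary: if `p` is an affine second integral with constant cofactor `λ`,
then any Runge–Kutta method preserves it with discrete cofactor equal to the
stability function `R(λh) = 1 + λh bᵀ(I − λh𝒜)⁻¹𝟙`. -/
theorem rk_constant_cofactor_stability_function {n s : ℕ}
    (f : (Fin n → ℝ) → (Fin n → ℝ))
    (p : Fin n → ℝ) (lam : ℝ)
    (hp : ∀ y, p ⬝ᵥ f y = lam * (p ⬝ᵥ y))
    (A : Matrix (Fin s) (Fin s) ℝ) (b : Fin s → ℝ) (h : ℝ)
    (x : Fin n → ℝ) (g : Fin s → (Fin n → ℝ))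
    (hg : ∀ i, g i = x + h • ∑ j, A i j • f (g j))
    (φ : Fin n → ℝ) (hφ : φ = x + h • ∑ j, b j • f (g j))
    (hinv : IsUnit ((1 : Matrix (Fin s) (Fin s) ℝ) - (lam * h) • A)) :
    p ⬝ᵥ φ =
      (1 + (lam * h) * (b ⬝ᵥ (((1 : Matrix (Fin s) (Fin s) ℝ) - (lam * h) • A)⁻¹).mulVec
        (fun _ => (1 : ℝ)))) * (p ⬝ᵥ x) := by
  subst hφ
  exact rk_constant_cofactor_stability_function_general
    (p := (dotProductBilin ℝ ℝ p).toAffineMap) (fun j ↦ hp (g j)) hg hinv b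
end

section
/- Let A, S ∈ ℝ^{n×n} with Aᵀ = −A (skew-symmetric) and Sᵀ = S (symmetric), let P be a real polynomial, and set M = AS. If the matrix P(−M) (polynomial evaluation of P at the matrix −M) is invertible, then the matrix R = P(M) P(−M)^{-1} satisfies Rᵀ S R = S. -/
open Matrix Polynomial

/-!
Skew-adjointness of `M` for the bilinear form of `S` says that `-M` is an adjoint of `M`, and taking
polynomials preserves adjoint pairs, so `U = P(M)` and `Q = P(-M)` are adjoint to each other. As
they also commute, `Uᵀ S U = S Q U = S U Q = Qᵀ S Q`: the form takes the same values on `U x` and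
`Q x`, which is to say that `U Q⁻¹` preserves it.
-/

section Aeval

variable {K B : Type*} [CommSemiring K] [Semiring B] [Algebra K B]

theorem semiconjBy_aeval_right {a x y : B} (h : SemiconjBy a x y) (p : K[X]) :
    SemiconjBy a (aeval x p) (aeval y p) := by
  induction p using Polynomial.induction_on' with
  | add p q hp hq => simpa only [map_add] using hp.add_right hq
  | monomial k c =>
    simpa only [aeval_monomial, ← Algebra.smul_def] using (h.pow_right k).smul_right c

theorem commute_aeval_aeval {x y : B} (h : Commute x y) (p q : K[X]) :
    Commute (aeval x p) (aeval y q) :=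
  have hx : Commute x (aeval y q) := semiconjBy_aeval_right h q
  have hy : Commute (aeval y q) (aeval x p) := semiconjBy_aeval_right hx.symm p
  hy.symm

end Aeval

theorem aeval_transpose {K R n : Type*} [CommSemiring K] [CommSemiring R] [Algebra K R]
    [Fintype n] [DecidableEq n] (X : Matrix n n R) (p : K[X]) :
    aeval Xᵀ p = (aeval X p)ᵀ := by
  apply MulOpposite.op_injective
  rw [← aeval_op_apply]
  exact aeval_algHom_apply (transposeAlgEquiv n K R) X p

section BilinearForm

variable {R n : Type*} [CommRing R] [Fintype n]

theorem isSkewAdjoint_mul {A S : Matrix n n R} (hA : Aᵀ = -A) (hS : Sᵀ = S) :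
    S.IsSkewAdjoint (A * S) :=
  calc (A * S)ᵀ * S = S * -A * S := by rw [transpose_mul, hA, hS]
    _ = S * -(A * S) := by rw [Matrix.mul_assoc, Matrix.neg_mul]

theorem isAdjointPair_neg {m : Type*} [Fintype m] {S : Matrix n n R} {T : Matrix m m R}
    {X : Matrix m n R} {Y : Matrix n m R} (h : S.IsAdjointPair T X Y) :
    S.IsAdjointPair T (-X) (-Y) :=
  calc (-X)ᵀ * T = -(Xᵀ * T) := by rw [transpose_neg, Matrix.neg_mul]
    _ = -(S * Y) := congrArg Neg.neg h
    _ = S * -Y := (Matrix.mul_neg S Y).symm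

theorem transpose_mul_mul_eq_of_isAdjointPair {S U Q : Matrix n n R}
    (hUQ : S.IsAdjointPair S U Q) (hQU : S.IsAdjointPair S Q U) (hcomm : Commute U Q) :
    Uᵀ * S * U = Qᵀ * S * Q :=
  calc Uᵀ * S * U = S * (Q * U) := by rw [hUQ, Matrix.mul_assoc]
    _ = S * (U * Q) := by rw [hcomm.eq]
    _ = Qᵀ * S * Q := by rw [hQU, Matrix.mul_assoc]

variable [DecidableEq n]

theorem transpose_mul_inv_mul_mul_inv {S T U Q : Matrix n n R}
    (h : Uᵀ * S * U = Qᵀ * T * Q) (hQ : IsUnit Q) :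
    (U * Q⁻¹)ᵀ * S * (U * Q⁻¹) = T := by
  have hQinv : Q * Q⁻¹ = 1 := mul_nonsing_inv Q ((isUnit_iff_isUnit_det Q).mp hQ)
  calc (U * Q⁻¹)ᵀ * S * (U * Q⁻¹) = Q⁻¹ᵀ * (Uᵀ * S * U) * Q⁻¹ := by
        simp only [transpose_mul, Matrix.mul_assoc]
    _ = (Q * Q⁻¹)ᵀ * T * (Q * Q⁻¹) := by
        rw [h]
        simp only [transpose_mul, Matrix.mul_assoc]
    _ = T := by rw [hQinv, transpose_one, Matrix.one_mul, Matrix.mul_one]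

variable {K : Type*} [CommSemiring K] [Algebra K R]

theorem isAdjointPair_aeval {S X Y : Matrix n n R} (h : S.IsAdjointPair S X Y) (p : K[X]) :
    S.IsAdjointPair S (aeval X p) (aeval Y p) := by
  have hS : SemiconjBy S (aeval Y p) (aeval Xᵀ p) := semiconjBy_aeval_right h.symm p
  rw [aeval_transpose] at hS
  exact hS.symm

theorem diagonal_pade_matrix_preserves_quadratic_form_general {S M : Matrix n n R}
    (hM : S.IsSkewAdjoint M) (P : K[X]) (hinv : IsUnit (aeval (-M) P)) :
    (aeval M P * (aeval (-M) P)⁻¹)ᵀ * S * (aeval M P * (aeval (-M) P)⁻¹) = S := by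
  have hUQ : S.IsAdjointPair S (aeval M P) (aeval (-M) P) := isAdjointPair_aeval hM P
  have hQU : S.IsAdjointPair S (aeval (-M) P) (aeval M P) := by
    simpa only [neg_neg] using isAdjointPair_aeval (isAdjointPair_neg hM) P
  have hcomm : Commute (aeval M P) (aeval (-M) P) :=
    commute_aeval_aeval (Commute.refl M).neg_right P P
  exact transpose_mul_inv_mul_mul_inv
    (transpose_mul_mul_eq_of_isAdjointPair hUQ hQU hcomm) hinv

end BilinearForm

/-- For `A` skew-symmetric, `S` symmetric, `M = AS`, and any real polynomial
`P` with `P(−M)` invertible, the diagonal Padé-type matrix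
`R = P(M)P(−M)⁻¹` satisfies `Rᵀ S R = S`. -/
theorem diagonal_pade_matrix_preserves_quadratic_form {n : ℕ}
    (A S : Matrix (Fin n) (Fin n) ℝ)
    (hA : Aᵀ = -A) (hS : Sᵀ = S)
    (P : Polynomial ℝ) (M : Matrix (Fin n) (Fin n) ℝ) (hM : M = A * S)
    (hinv : IsUnit (Polynomial.aeval (-M) P))
    (R : Matrix (Fin n) (Fin n) ℝ)
    (hR : R = Polynomial.aeval M P * (Polynomial.aeval (-M) P)⁻¹) :
    Rᵀ * S * R = S := by
  subst hM hR
  exact diagonal_pade_matrix_preserves_quadratic_form_general (isSkewAdjoint_mul hA hS) P hinv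
end

section
/- Let A, S ∈ ℝ^{n×n} with Aᵀ = −A and Sᵀ = S, let P be a real polynomial, set M = AS, and suppose P(−M) is invertible. Let R = P(M) P(−M)^{-1}. Then for every x ∈ ℝ^n, (Rx)ᵀ S (Rx) = xᵀ S x. (Hence every diagonal Padé Runge–Kutta map applied to a linear ODE ẋ = ASx preserves the quadratic first integral H(x) = xᵀSx exactly.) -/
open Matrix Polynomial

/-!
`M = AS` is skew-adjoint for the form `S`, so `P(M)` and `P(-M)` are mutually adjoint; they also
commute. Moving one factor across the form and back therefore shows that `P(M)` and `P(-M)` pull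
the form back to the same form, and `P(M) P(-M)⁻¹`, which sends `P(-M) u` to `P(M) u`, preserves it.
-/

section BilinearMap

variable {K V W : Type*} [CommRing K] [AddCommGroup V] [Module K V] [AddCommGroup W] [Module K W]
  {B : LinearMap.BilinMap K V W} {f g : Module.End K V}

theorem isAdjointPair_pow (h : LinearMap.IsAdjointPair B B f g) (k : ℕ) :
    LinearMap.IsAdjointPair B B ⇑(f ^ k) ⇑(g ^ k) := by
  induction k with
  | zero => exact LinearMap.isAdjointPair_one
  | succ k ih =>
    rw [pow_succ, pow_succ']
    exact ih.mul h

theorem isAdjointPair_aeval_s13 (h : LinearMap.IsAdjointPair B B f g) (P : K[X]) :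
    LinearMap.IsAdjointPair B B (aeval f P) (aeval g P) := by
  induction P using Polynomial.induction_on' with
  | add P Q hP hQ =>
    simp only [map_add]
    exact hP.add hQ
  | monomial k c =>
    simp only [aeval_monomial, ← Algebra.smul_def]
    exact (isAdjointPair_pow h k).smul c

theorem apply_apply_eq_of_isAdjointPair_of_commute (hfg : LinearMap.IsAdjointPair B B f g)
    (hgf : LinearMap.IsAdjointPair B B g f) (hcomm : Commute f g) (x y : V) :
    B (f x) (f y) = B (g x) (g y) :=
  calc
    B (f x) (f y) = B x ((g * f) y) := hfg x (f y)
    _ = B x ((f * g) y) := by rw [hcomm.eq]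
    _ = B (g x) (g y) := (hgf x (g y)).symm

end BilinearMap

theorem commute_aeval_aeval_neg {K E : Type*} [CommRing K] [Ring E] [Algebra K E] (a : E)
    (P : K[X]) : Commute (aeval a P) (aeval (-a) P) := by
  have hneg : aeval (-a) P = aeval a (P.comp (-X)) := by
    rw [aeval_comp, map_neg, aeval_X]
  rw [hneg]
  exact (Commute.all P (P.comp (-X))).map (aeval a)

theorem diagonal_pade_rk_preserves_quadratic_integral_general {K V W : Type*} [CommRing K]
    [AddCommGroup V] [Module K V] [AddCommGroup W] [Module K W] {B : LinearMap.BilinMap K V W}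
    {f g : Module.End K V} (hf : B.IsSkewAdjoint f) {P : K[X]} (hg : aeval (-f) P * g = 1)
    (x y : V) :
    B ((aeval f P * g) x) ((aeval f P * g) y) = B x y := by
  have hf_adj : LinearMap.IsAdjointPair B B f (-f : Module.End K V) := hf
  have hf_adj_neg : LinearMap.IsAdjointPair B B (-f : Module.End K V) f := fun u v => by
    simpa using congrArg Neg.neg (hf u v)
  have hg_apply (z : V) : aeval (-f) P (g z) = z := LinearMap.congr_fun hg z
  calc
    B (aeval f P (g x)) (aeval f P (g y)) = B (aeval (-f) P (g x)) (aeval (-f) P (g y)) :=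
      apply_apply_eq_of_isAdjointPair_of_commute (isAdjointPair_aeval_s13 hf_adj P)
        (isAdjointPair_aeval_s13 hf_adj_neg P) (commute_aeval_aeval_neg f P) (g x) (g y)
    _ = B x y := by rw [hg_apply, hg_apply]

section Matrix

variable {K ι : Type*} [CommRing K] [Fintype ι] {A S M N : Matrix ι ι K}

theorem isSkewAdjoint_mul_of_transpose_eq_neg (hA : Aᵀ = -A) (hS : Sᵀ = S) :
    S.IsSkewAdjoint (A * S) := by
  rw [Matrix.IsSkewAdjoint, Matrix.IsAdjointPair, transpose_mul, hA, hS]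
  simp only [Matrix.mul_neg, Matrix.neg_mul, Matrix.mul_assoc]

theorem aeval_mul_mulVec_dotProduct_mulVec_of_isSkewAdjoint [DecidableEq ι]
    (hM : S.IsSkewAdjoint M) {P : K[X]} (hN : aeval (-M) P * N = 1) (x y : ι → K) :
    ((aeval M P * N) *ᵥ x) ⬝ᵥ (S *ᵥ ((aeval M P * N) *ᵥ y)) = x ⬝ᵥ (S *ᵥ y) := by
  let φ : Matrix ι ι K ≃ₐ[K] Module.End K (ι → K) := toLinAlgEquiv'
  have hskew : (toLinearMap₂' K S).IsSkewAdjoint (φ M) := by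
    have h := (isAdjointPair_toLinearMap₂' S S M (-M)).2 hM
    rwa [map_neg] at h
  have hinv : aeval (-φ M) P * φ N = 1 := by
    rw [← map_neg, aeval_algHom_apply, ← map_mul, hN, map_one]
  have h := diagonal_pade_rk_preserves_quadratic_integral_general hskew hinv x y
  rwa [aeval_algHom_apply, ← map_mul, toLinearMap₂'_apply', toLinearMap₂'_apply'] at h

end Matrix

/-- Every diagonal Padé Runge–Kutta map `x ↦ P(M)P(−M)⁻¹ x` applied to the
linear ODE `ẋ = ASx` (with `A` skew-symmetric, `S` symmetric, `M = AS`)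
preserves the quadratic first integral `H(x) = xᵀSx` exactly. -/
theorem diagonal_pade_rk_preserves_quadratic_integral {n : ℕ}
    (A S : Matrix (Fin n) (Fin n) ℝ)
    (hA : Aᵀ = -A) (hS : Sᵀ = S)
    (P : Polynomial ℝ) (M : Matrix (Fin n) (Fin n) ℝ) (hM : M = A * S)
    (hinv : IsUnit (Polynomial.aeval (-M) P))
    (R : Matrix (Fin n) (Fin n) ℝ)
    (hR : R = Polynomial.aeval M P * (Polynomial.aeval (-M) P)⁻¹) :
    ∀ x : Fin n → ℝ,
      R.mulVec x ⬝ᵥ S.mulVec (R.mulVec x) = x ⬝ᵥ S.mulVec x := by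
  subst hM hR
  have hright := mul_nonsing_inv _ ((isUnit_iff_isUnit_det _).1 hinv)
  exact fun x => aeval_mul_mulVec_dotProduct_mulVec_of_isSkewAdjoint
    (isSkewAdjoint_mul_of_transpose_eq_neg hA hS) hright x x
end
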